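/- arXiv:2510.19953 — 7 statements merged into one kernel-verified Lean document; each statement's English description precedes it below -/
import Mathlib

section
/- Let d ≥ 1, let f : ℝ^d → ℝ be differentiable with L-Lipschitz gradient ∇f, and fix x, v ∈ ℝ^d. Define δ(μ) := (f(x + μ·v) − f(x))/μ − ⟨∇f(x), v⟩ for μ > 0. Then for all 0 < μ' ≤ μ, |δ(μ) − δ(μ')| ≤ (L/2)·‖v‖²·(μ − μ'). -/
open scoped RealInnerProductSpace

/-- For `f` differentiable with `L`-Lipschitz gradient and
`δ(μ) := (f (x + μ v) - f x)/μ - ⟪∇f x, v⟫`, one has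
`|δ μ - δ μ'| ≤ (L/2) ‖v‖² (μ - μ')` for all `0 < μ' ≤ μ`. -/
theorem divided_difference_remainder_difference_bound
    (d : ℕ) (hd : 1 ≤ d) (f : EuclideanSpace ℝ (Fin d) → ℝ) (L : ℝ)
    (hf : Differentiable ℝ f)
    (hlip : ∀ x y : EuclideanSpace ℝ (Fin d),
      ‖gradient f x - gradient f y‖ ≤ L * ‖x - y‖)
    (x v : EuclideanSpace ℝ (Fin d))
    (δ : ℝ → ℝ)
    (hδ : ∀ μ : ℝ, 0 < μ → δ μ = (f (x + μ • v) - f x) / μ - ⟪gradient f x, v⟫)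
    (μ μ' : ℝ) (hμ' : 0 < μ') (hle : μ' ≤ μ) :
    |δ μ - δ μ'| ≤ (L / 2) * ‖v‖ ^ 2 * (μ - μ') := by
  have hμ : 0 < μ := lt_of_lt_of_le hμ' hle
  have key : ∀ m : ℝ, 0 < m → ∀ t : ℝ,
      HasDerivAt (fun t : ℝ => (f (x + (t * m) • v) - f x) / m)
        ⟪gradient f (x + (t * m) • v), v⟫ t := by
    intro m hm t
    have h1 : HasDerivAt (fun t : ℝ => x + (t * m) • v) (m • v) t := by
      have h2 : HasDerivAt (fun t : ℝ => t * m) m t := by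
        simpa using (hasDerivAt_id t).mul_const m
      simpa using (h2.smul_const v).const_add x
    have h3 := (hf (x + (t * m) • v)).hasGradientAt.hasFDerivAt.comp_hasDerivAt t h1
    have h4 := (h3.sub_const (f x)).div_const m
    refine HasDerivAt.congr_deriv h4 ?_
    simp only [InnerProductSpace.toDual_apply_apply, inner_smul_right]
    field_simp
  have hder : ∀ t : ℝ, HasDerivAt
      (fun t : ℝ => (f (x + (t * μ) • v) - f x) / μ - (f (x + (t * μ') • v) - f x) / μ')
      (⟪gradient f (x + (t * μ) • v), v⟫ - ⟪gradient f (x + (t * μ') • v), v⟫) t :=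
    fun t => (key μ hμ t).sub (key μ' hμ' t)
  have hB : ∀ t : ℝ, HasDerivAt (fun t : ℝ => (L / 2) * ‖v‖ ^ 2 * (μ - μ') * t ^ 2)
      (L * ‖v‖ ^ 2 * (μ - μ') * t) t := by
    intro t
    have h := (hasDerivAt_pow 2 t).const_mul ((L / 2) * ‖v‖ ^ 2 * (μ - μ'))
    refine HasDerivAt.congr_deriv h ?_
    push_cast
    ring
  have main := image_norm_le_of_norm_deriv_right_le_deriv_boundary
    (a := 0) (b := 1)
    (fun t _ => (hder t).continuousAt.continuousWithinAt)
    (fun t _ => (hder t).hasDerivWithinAt)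
    (by simp) hB
    (by
      intro t ht
      rw [← inner_sub_left, Real.norm_eq_abs]
      refine (abs_real_inner_le_norm _ _).trans ?_
      refine (mul_le_mul_of_nonneg_right (hlip _ _) (norm_nonneg v)).trans (le_of_eq ?_)
      have e : x + (t * μ) • v - (x + (t * μ') • v) = (t * (μ - μ')) • v := by
        module
      rw [e, norm_smul, Real.norm_eq_abs,
        abs_of_nonneg (mul_nonneg ht.1 (sub_nonneg.2 hle))]
      ring)
    (x := 1) (by simp)
  rw [hδ μ hμ, hδ μ' hμ', sub_sub_sub_cancel_right]
  simpa using main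
end

section
/- Let d ≥ 1, let f : ℝ^d → ℝ be differentiable with L-Lipschitz gradient ∇f, fix x, v ∈ ℝ^d, and let (μ_n)_{n≥1} be a sequence of positive reals with ∑_{n=1}^∞ μ_n < ∞. Writing Δ_n := (f(x + μ_n·v) − f(x))/μ_n, the sequence n ↦ Δ_{n+1} − Δ_n is absolutely summable, and ∑_{n=1}^∞ |Δ_{n+1} − Δ_n| ≤ (L/2)·‖v‖²·∑_{n=1}^∞ (μ_n + μ_{n+1}). -/
open scoped RealInnerProductSpace

/-- For `f` differentiable with `L`-Lipschitz gradient and positive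
summable stepsizes `(μ n)`, the differences of divided differences
`Δ n := (f (x + μ n • v) - f x)/μ n` are absolutely summable, with
`∑ |Δ (n+1) - Δ n| ≤ (L/2) ‖v‖² ∑ (μ n + μ (n+1))`. -/
theorem divided_difference_telescoping_abs_summable
    (d : ℕ) (hd : 1 ≤ d) (f : EuclideanSpace ℝ (Fin d) → ℝ) (L : ℝ)
    (hf : Differentiable ℝ f)
    (hlip : ∀ x y : EuclideanSpace ℝ (Fin d),
      ‖gradient f x - gradient f y‖ ≤ L * ‖x - y‖)
    (x v : EuclideanSpace ℝ (Fin d))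
    (μ : ℕ → ℝ) (hμpos : ∀ n, 0 < μ n) (hμsum : Summable μ)
    (Δ : ℕ → ℝ) (hΔ : ∀ n, Δ n = (f (x + μ n • v) - f x) / μ n) :
    Summable (fun n => |Δ (n + 1) - Δ n|) ∧
      ∑' n, |Δ (n + 1) - Δ n| ≤ (L / 2) * ‖v‖ ^ 2 * ∑' n, (μ n + μ (n + 1)) := by
  have key : ∀ t : ℝ, 0 ≤ t →
      |f (x + t • v) - f x - t * inner ℝ (gradient f x) v| ≤ L / 2 * ‖v‖ ^ 2 * t ^ 2 := by
    intro t ht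
    have hder : ∀ s : ℝ, HasDerivAt
        (fun s : ℝ => f (x + s • v) - f x - s * inner ℝ (gradient f x) v)
        (inner ℝ (gradient f (x + s • v) - gradient f x) v) s := by
      intro s
      have h1 : HasDerivAt (fun s : ℝ => x + s • v) v s := by
        simpa using ((hasDerivAt_id s).smul_const v).const_add x
      have h2 := (hf (x + s • v)).hasGradientAt.hasFDerivAt.comp_hasDerivAt s h1
      have h3 := (h2.sub_const (f x)).sub
        ((hasDerivAt_id s).mul_const (inner ℝ (gradient f x) v))
      rw [inner_sub_left]
      refine HasDerivAt.congr_deriv h3 ?_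
      simp
    have hB : ∀ s : ℝ, HasDerivAt (fun s : ℝ => L / 2 * ‖v‖ ^ 2 * s ^ 2)
        (L * ‖v‖ ^ 2 * s) s := by
      intro s
      have h := ((hasDerivAt_id s).pow 2).const_mul (L / 2 * ‖v‖ ^ 2)
      refine HasDerivAt.congr_deriv h ?_
      simp only [id, Nat.cast_ofNat]
      ring
    have := image_norm_le_of_norm_deriv_right_le_deriv_boundary
      (a := 0) (b := t)
      (fun s _ => (hder s).continuousAt.continuousWithinAt)
      (fun s _ => (hder s).hasDerivWithinAt) (by simp) hB
      (fun s hs => by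
        refine (norm_inner_le_norm _ _).trans ?_
        have h := hlip (x + s • v) x
        rw [add_sub_cancel_left, norm_smul, Real.norm_of_nonneg hs.1] at h
        calc _ ≤ L * (s * ‖v‖) * ‖v‖ := by gcongr
          _ = _ := by ring)
      (Set.right_mem_Icc.2 ht)
    simpa using this
  have key2 : ∀ n, |Δ n - inner ℝ (gradient f x) v| ≤ L / 2 * ‖v‖ ^ 2 * μ n := by
    intro n
    have hp := hμpos n
    have h := key (μ n) hp.le
    have e : Δ n - inner ℝ (gradient f x) v =
        (f (x + μ n • v) - f x - μ n * inner ℝ (gradient f x) v) / μ n := by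
      rw [hΔ]; field_simp
    rw [e, abs_div, abs_of_pos hp, div_le_iff₀ hp]
    linarith
  have key3 : ∀ n, |Δ (n + 1) - Δ n| ≤ L / 2 * ‖v‖ ^ 2 * (μ n + μ (n + 1)) := by
    intro n
    have h1 := abs_le.1 (key2 n)
    have h2 := abs_le.1 (key2 (n + 1))
    rw [abs_le]
    constructor <;> linarith [h1.1, h1.2, h2.1, h2.2]
  have hs : Summable (fun n => L / 2 * ‖v‖ ^ 2 * (μ n + μ (n + 1))) :=
    (hμsum.add ((summable_nat_add_iff 1).2 hμsum)).mul_left _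
  have hs2 := Summable.of_nonneg_of_le (fun n => abs_nonneg (Δ (n + 1) - Δ n)) key3 hs
  refine ⟨hs2, ?_⟩
  rw [← tsum_mul_left]
  exact hs2.tsum_le_tsum key3 hs
end

section
/- Let d ≥ 1, let f : ℝ^d → ℝ be differentiable with L-Lipschitz gradient ∇f, fix x, v ∈ ℝ^d, let (μ_n)_{n≥1} be positive reals with ∑_{n=1}^∞ μ_n < ∞, and let (p_n)_{n≥1} be a PMF. Writing Δ_n := (f(x + μ_n·v) − f(x))/μ_n, the series with terms a_n := p_n·Δ_1 + (Δ_{n+1} − Δ_n) (that is, a_n = p_n·[Δ_1 + (1/p_n)(Δ_{n+1} − Δ_n)]) is absolutely convergent (summable in ℝ), and ∑_{n=1}^∞ a_n = ⟨∇f(x), v⟩, the directional derivative of f at x along v. -/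
open scoped RealInnerProductSpace

/-- For `f` differentiable with `L`-Lipschitz gradient, positive
summable stepsizes `(μ n)` and a PMF `(p n)`, the telescoping series with terms
`a n = p n * Δ 1 + (Δ (n+1) - Δ n)` (where `Δ n := (f (x + μ n • v) - f x)/μ n`, and
the sequences are indexed so that index `0` corresponds to the paper's `n = 1`)
is absolutely convergent and sums to the directional derivative `⟪∇f x, v⟫`. -/
theorem telescoping_series_expectation_representation
    (d : ℕ) (hd : 1 ≤ d) (f : EuclideanSpace ℝ (Fin d) → ℝ) (L : ℝ)
    (hf : Differentiable ℝ f)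
    (hlip : ∀ x y : EuclideanSpace ℝ (Fin d),
      ‖gradient f x - gradient f y‖ ≤ L * ‖x - y‖)
    (x v : EuclideanSpace ℝ (Fin d))
    (μ : ℕ → ℝ) (hμpos : ∀ n, 0 < μ n) (hμsum : Summable μ)
    (p : ℕ → ℝ) (hppos : ∀ n, 0 < p n) (hpsum : ∑' n, p n = 1)
    (Δ : ℕ → ℝ) (hΔ : ∀ n, Δ n = (f (x + μ n • v) - f x) / μ n)
    (a : ℕ → ℝ) (ha : ∀ n, a n = p n * Δ 0 + (Δ (n + 1) - Δ n)) :
    Summable (fun n => |a n|) ∧ ∑' n, a n = ⟪gradient f x, v⟫ := by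
  have hder : ∀ t : ℝ, HasDerivAt (fun t : ℝ => f (x + t • v)) ⟪gradient f (x + t • v), v⟫ t := by
    intro t
    have h1 : HasDerivAt (fun t : ℝ => x + t • v) v t := by
      simpa using ((hasDerivAt_id t).smul_const v).const_add x
    have h2 := (hf (x + t • v)).hasGradientAt.hasFDerivAt.comp_hasDerivAt t h1
    simpa [Function.comp_def] using h2
  have hbound : ∀ n, |Δ n - ⟪gradient f x, v⟫| ≤ (|L| * ‖v‖ * ‖v‖) * μ n := by
    intro n
    obtain ⟨c, hc, hceq⟩ := exists_hasDerivAt_eq_slope (fun t : ℝ => f (x + t • v))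
      (fun t => ⟪gradient f (x + t • v), v⟫) (hμpos n)
      (fun t _ => (hder t).continuousAt.continuousWithinAt) (fun t _ => hder t)
    have hD : Δ n = ⟪gradient f (x + c • v), v⟫ := by
      rw [hceq, hΔ]; simp
    rw [hD, ← inner_sub_left]
    have h3 : ‖gradient f (x + c • v) - gradient f x‖ ≤ |L| * (μ n * ‖v‖) := by
      refine (hlip _ _).trans ?_
      have h4 : ‖x + c • v - x‖ = c * ‖v‖ := by
        rw [add_sub_cancel_left, norm_smul, Real.norm_of_nonneg hc.1.le]
      rw [h4]
      have h5 := hc.1.le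
      have h6 := hc.2.le
      gcongr
      exact le_abs_self L
    calc |⟪gradient f (x + c • v) - gradient f x, v⟫|
        ≤ ‖gradient f (x + c • v) - gradient f x‖ * ‖v‖ := abs_real_inner_le_norm _ _
      _ ≤ |L| * (μ n * ‖v‖) * ‖v‖ := by gcongr
      _ = _ := by ring
  set e : ℕ → ℝ := fun n => Δ n - ⟪gradient f x, v⟫ with he
  have hes : Summable e := Summable.of_norm_bounded (hμsum.mul_left _) hbound
  have hp : Summable p := by
    by_contra h
    rw [tsum_eq_zero_of_not_summable h] at hpsum
    exact zero_ne_one hpsum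
  have hes' : Summable (fun n => e (n + 1)) := (summable_nat_add_iff 1).2 hes
  have hae : a = fun n => p n * Δ 0 + (e (n + 1) - e n) := by
    funext n
    rw [ha]; simp [he]
  have hsum := (hp.hasSum.mul_right (Δ 0)).add (hes'.hasSum.sub hes.hasSum)
  rw [← hae] at hsum
  refine ⟨hsum.summable.abs, ?_⟩
  rw [hsum.tsum_eq, hpsum, hes.tsum_eq_zero_add]
  simp only [he]
  ring
end

section
/- Let d ≥ 1, let f : ℝ^d → ℝ be twice continuously differentiable with L-Lipschitz gradient ∇f, fix x ∈ ℝ^d, let (μ_n)_{n≥1} be positive reals with ∑_{n=1}^∞ μ_n < ∞, let (p_n)_{n≥1} be a PMF, and let σ_d be the uniform probability measure on the sphere {v ∈ ℝ^d : ‖v‖ = √d}. Writing Δ_n(v) := (f(x + μ_n·v) − f(x))/μ_n and P₄(n, v) := Δ_1(v) + (1/p_n)(Δ_{n+1}(v) − Δ_n(v)), the P₄-estimator is an unbiased estimator of the gradient: ∫ (∑_{n=1}^∞ p_n·P₄(n, v))·v dσ_d(v) = ∇f(x). -/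
open MeasureTheory
open scoped RealInnerProductSpace


lemma P4aux_coord_bound {d : ℕ} (σ : Measure (EuclideanSpace ℝ (Fin d))) [IsProbabilityMeasure σ]
    (hsupp : σ (Metric.sphere (0 : EuclideanSpace ℝ (Fin d)) (Real.sqrt d)) = 1) :
    ∀ᵐ v ∂σ, ‖v‖ = Real.sqrt d := by
  have h := (prob_compl_eq_zero_iff (μ := σ)
    (Metric.isClosed_sphere (x := (0 : EuclideanSpace ℝ (Fin d)))
      (ε := Real.sqrt d)).measurableSet).2 hsupp
  have h2 : ∀ᵐ v ∂σ, v ∈ Metric.sphere (0 : EuclideanSpace ℝ (Fin d)) (Real.sqrt d) := h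
  filter_upwards [h2] with v hv
  simpa using hv

lemma P4aux_integrable {d : ℕ} (σ : Measure (EuclideanSpace ℝ (Fin d))) [IsProbabilityMeasure σ]
    (hsupp : σ (Metric.sphere (0 : EuclideanSpace ℝ (Fin d)) (Real.sqrt d)) = 1)
    (i j : Fin d) : Integrable (fun v : EuclideanSpace ℝ (Fin d) => v i * v j) σ := by
  refine Integrable.of_bound (C := Real.sqrt d * Real.sqrt d)
    (Continuous.aestronglyMeasurable (by fun_prop)) ?_
  filter_upwards [P4aux_coord_bound σ hsupp] with v hv
  rw [norm_mul, ← hv]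
  gcongr
  · exact PiLp.norm_apply_le v i
  · exact PiLp.norm_apply_le v j

lemma P4aux_offdiag {d : ℕ} (σ : Measure (EuclideanSpace ℝ (Fin d)))
    (hinv : ∀ R : EuclideanSpace ℝ (Fin d) ≃ₗᵢ[ℝ] EuclideanSpace ℝ (Fin d),
      Measure.map R σ = σ) (i j : Fin d) (hij : i ≠ j) :
    ∫ v : EuclideanSpace ℝ (Fin d), v i * v j ∂σ = 0 := by
  let R : EuclideanSpace ℝ (Fin d) ≃ₗᵢ[ℝ] EuclideanSpace ℝ (Fin d) :=
    LinearIsometryEquiv.piLpCongrRight 2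
      (fun k => if k = i then LinearIsometryEquiv.neg ℝ else LinearIsometryEquiv.refl ℝ ℝ)
  have hR : ∀ v : EuclideanSpace ℝ (Fin d), R v i * R v j = - (v i * v j) := by
    intro v
    simp [R, hij.symm]
  have h : ∫ v, v i * v j ∂(Measure.map R σ) = ∫ v, R v i * R v j ∂σ :=
    integral_map R.continuous.measurable.aemeasurable
      (Continuous.aestronglyMeasurable (by fun_prop))
  rw [hinv R] at h
  simp only [hR, integral_neg] at h
  linarith

lemma P4aux_diag_eq {d : ℕ} (σ : Measure (EuclideanSpace ℝ (Fin d)))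
    (hinv : ∀ R : EuclideanSpace ℝ (Fin d) ≃ₗᵢ[ℝ] EuclideanSpace ℝ (Fin d),
      Measure.map R σ = σ) (i j : Fin d) :
    ∫ v : EuclideanSpace ℝ (Fin d), v i * v i ∂σ = ∫ v, v j * v j ∂σ := by
  let R : EuclideanSpace ℝ (Fin d) ≃ₗᵢ[ℝ] EuclideanSpace ℝ (Fin d) :=
    LinearIsometryEquiv.piLpCongrLeft 2 ℝ ℝ (Equiv.swap i j)
  have hR : ∀ v : EuclideanSpace ℝ (Fin d), R v i = v j := by
    intro v
    simp [R, LinearIsometryEquiv.piLpCongrLeft_apply, Equiv.piCongrLeft'_apply]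
  have h : ∫ v, v i * v i ∂(Measure.map R σ) = ∫ v, R v i * R v i ∂σ :=
    integral_map R.continuous.measurable.aemeasurable
      (Continuous.aestronglyMeasurable (by fun_prop))
  rw [hinv R] at h
  simpa only [hR] using h

lemma P4aux_diag {d : ℕ} (hd : 1 ≤ d) (σ : Measure (EuclideanSpace ℝ (Fin d)))
    [IsProbabilityMeasure σ]
    (hsupp : σ (Metric.sphere (0 : EuclideanSpace ℝ (Fin d)) (Real.sqrt d)) = 1)
    (hinv : ∀ R : EuclideanSpace ℝ (Fin d) ≃ₗᵢ[ℝ] EuclideanSpace ℝ (Fin d),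
      Measure.map R σ = σ) (i : Fin d) :
    ∫ v : EuclideanSpace ℝ (Fin d), v i * v i ∂σ = 1 := by
  have h1 : ∫ v : EuclideanSpace ℝ (Fin d), ∑ j, v j * v j ∂σ = d := by
    have : ∀ᵐ v : EuclideanSpace ℝ (Fin d) ∂σ, ∑ j, v j * v j = (d : ℝ) := by
      filter_upwards [P4aux_coord_bound σ hsupp] with v hv
      have h := EuclideanSpace.real_norm_sq_eq v
      rw [hv, Real.sq_sqrt (Nat.cast_nonneg d)] at h
      simp only [h, sq]
    rw [integral_congr_ae this]
    simp
  rw [integral_finsetSum _ (fun j _ => P4aux_integrable σ hsupp j j)] at h1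
  simp only [fun j => P4aux_diag_eq σ hinv j i] at h1
  have hd' : (d : ℝ) ≠ 0 := by positivity
  simp at h1
  exact mul_left_cancel₀ hd' (h1.trans (mul_one _).symm)

lemma P4aux_integral {d : ℕ} (hd : 1 ≤ d) (σ : Measure (EuclideanSpace ℝ (Fin d)))
    [IsProbabilityMeasure σ]
    (hsupp : σ (Metric.sphere (0 : EuclideanSpace ℝ (Fin d)) (Real.sqrt d)) = 1)
    (hinv : ∀ R : EuclideanSpace ℝ (Fin d) ≃ₗᵢ[ℝ] EuclideanSpace ℝ (Fin d),
      Measure.map R σ = σ) (g : EuclideanSpace ℝ (Fin d)) :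
    ∫ v, (⟪g, v⟫ : ℝ) • v ∂σ = g := by
  have hint : Integrable (fun v => (⟪g, v⟫ : ℝ) • v) σ := by
    refine Integrable.of_bound (C := ‖g‖ * Real.sqrt d * Real.sqrt d)
      (Continuous.aestronglyMeasurable (by fun_prop)) ?_
    filter_upwards [P4aux_coord_bound σ hsupp] with v hv
    rw [norm_smul, ← hv]
    gcongr
    exact norm_inner_le_norm g v
  ext i
  have h := (EuclideanSpace.proj i : EuclideanSpace ℝ (Fin d) →L[ℝ] ℝ).integral_comp_comm hint
  refine h.symm.trans ?_
  change ∫ v, ((⟪g, v⟫ : ℝ) • v) i ∂σ = g i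
  have h2 : ∀ v : EuclideanSpace ℝ (Fin d),
      ((⟪g, v⟫ : ℝ) • v) i = ∑ j, g j * (v j * v i) := by
    intro v
    simp only [PiLp.smul_apply, smul_eq_mul, PiLp.inner_apply, Finset.sum_mul]
    refine Finset.sum_congr rfl fun j _ => ?_
    simp
    ring
  simp only [h2]
  rw [integral_finsetSum _ (fun j _ => (P4aux_integrable σ hsupp j i).const_mul _)]
  simp only [integral_const_mul]
  rw [Finset.sum_eq_single i]
  · rw [P4aux_diag hd σ hsupp hinv, mul_one]
  · intro j _ hj
    rw [P4aux_offdiag σ hinv j i hj, mul_zero]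
  · simp

lemma P4aux_taylor {d : ℕ} (f : EuclideanSpace ℝ (Fin d) → ℝ) (L : ℝ)
    (hf : ContDiff ℝ 2 f)
    (hlip : ∀ x y : EuclideanSpace ℝ (Fin d),
      ‖gradient f x - gradient f y‖ ≤ L * ‖x - y‖)
    (x v : EuclideanSpace ℝ (Fin d)) (t : ℝ) (ht : 0 < t) :
    |(f (x + t • v) - f x) / t - ⟪gradient f x, v⟫| ≤ |L| * ‖v‖ ^ 2 * t := by
  have hg : ∀ z, HasFDerivAt f (InnerProductSpace.toDual ℝ _ (gradient f z)) z := fun z =>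
    ((hf.differentiable (by norm_num)) z).hasGradientAt.hasFDerivAt
  have h := (convex_closedBall x ‖t • v‖).norm_image_sub_le_of_norm_hasFDerivWithin_le'
    (f := f) (C := |L| * ‖t • v‖) (φ := InnerProductSpace.toDual ℝ _ (gradient f x))
    (y := x + t • v) (x := x)
    (fun z _ => (hg z).hasFDerivWithinAt) (fun z hz => by
      rw [← map_sub, LinearIsometryEquiv.norm_map]
      refine (hlip z x).trans ?_
      rw [mem_closedBall_iff_norm] at hz
      gcongr
      exact le_abs_self L) (by simp) (by simp)
  simp only [add_sub_cancel_left, InnerProductSpace.toDual_apply_apply, inner_smul_right,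
    norm_smul, Real.norm_eq_abs, abs_of_pos ht] at h
  have e : (f (x + t • v) - f x) / t - ⟪gradient f x, v⟫
      = (f (x + t • v) - f x - t * ⟪gradient f x, v⟫) / t := by
    field_simp
  rw [e, abs_div, abs_of_pos ht, div_le_iff₀ ht]
  refine h.trans (le_of_eq ?_)
  ring

/-- For `f` twice continuously differentiable with `L`-Lipschitz
gradient, positive summable stepsizes `(μ n)`, a PMF `(p n)` and `σ` the uniform
probability measure on the sphere of radius `√d`, the `P₄`-estimator
`P₄ n v = Δ 1 v + (1/p n) (Δ (n+1) v - Δ n v)` (index `0` corresponds to the paper's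
`n = 1`, `Δ n v := (f (x + μ n • v) - f x)/μ n`) is an unbiased estimator of the
gradient: `∫ (∑ n, p n * P₄ n v) • v dσ(v) = ∇f x`. -/
theorem P4_estimator_unbiased
    (d : ℕ) (hd : 1 ≤ d) (f : EuclideanSpace ℝ (Fin d) → ℝ) (L : ℝ)
    (hf : ContDiff ℝ 2 f)
    (hlip : ∀ x y : EuclideanSpace ℝ (Fin d),
      ‖gradient f x - gradient f y‖ ≤ L * ‖x - y‖)
    (x : EuclideanSpace ℝ (Fin d))
    (μ : ℕ → ℝ) (hμpos : ∀ n, 0 < μ n) (hμsum : Summable μ)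
    (p : ℕ → ℝ) (hppos : ∀ n, 0 < p n) (hpsum : ∑' n, p n = 1)
    (σ : Measure (EuclideanSpace ℝ (Fin d))) [IsProbabilityMeasure σ]
    (hsupp : σ (Metric.sphere (0 : EuclideanSpace ℝ (Fin d)) (Real.sqrt d)) = 1)
    (hinv : ∀ R : EuclideanSpace ℝ (Fin d) ≃ₗᵢ[ℝ] EuclideanSpace ℝ (Fin d),
      Measure.map R σ = σ)
    (Δ : ℕ → EuclideanSpace ℝ (Fin d) → ℝ)
    (hΔ : ∀ n v, Δ n v = (f (x + μ n • v) - f x) / μ n)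
    (P₄ : ℕ → EuclideanSpace ℝ (Fin d) → ℝ)
    (hP₄ : ∀ n v, P₄ n v = Δ 0 v + (1 / p n) * (Δ (n + 1) v - Δ n v)) :
    ∫ v, (∑' n, p n * P₄ n v) • v ∂σ = gradient f x := by
  have key : ∀ v, ∑' n, p n * P₄ n v = ⟪gradient f x, v⟫ := by
    intro v
    have hps : HasSum p 1 := by
      have : Summable p := by
        by_contra h
        rw [tsum_eq_zero_of_not_summable h] at hpsum
        exact zero_ne_one hpsum
      exact hpsum ▸ this.hasSum
    have hb : ∀ n, |Δ n v - ⟪gradient f x, v⟫| ≤ |L| * ‖v‖ ^ 2 * μ n := fun n => by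
      rw [hΔ]
      exact P4aux_taylor f L hf hlip x v (μ n) (hμpos n)
    generalize (⟪gradient f x, v⟫ : ℝ) = c at hb ⊢
    have hs : Summable (fun n => Δ n v - c) :=
      Summable.of_norm_bounded (hμsum.mul_left _) hb
    have hs' : Summable (fun n => Δ (n + 1) v - c) :=
      (summable_nat_add_iff 1).2 hs
    have h0 := hs.tsum_eq_zero_add
    have hH := (hps.mul_right (Δ 0 v)).add (hs'.hasSum.sub hs.hasSum)
    have e : ∀ n, p n * P₄ n v = p n * Δ 0 v +
        ((Δ (n + 1) v - c) - (Δ n v - c)) := by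
      intro n
      have := (hppos n).ne'
      rw [hP₄]
      rw [mul_add, ← mul_assoc, mul_one_div_cancel this]
      ring
    simp only [e]
    rw [hH.tsum_eq, h0]
    ring
  simp only [key]
  exact P4aux_integral hd σ hsupp hinv _
end

section
/- Let d ≥ 1, let f : ℝ^d → ℝ be continuous, fix x, v ∈ ℝ^d with f(x) ≠ 0, let (μ_n)_{n≥1} be a sequence of positive reals with μ_n → 0, and let (p_n)_{n≥1} be a PMF. Then the nonnegative sequence n ↦ f(x + μ_n·v)²/(p_n·μ_n²) is not summable, i.e. ∑_{n=1}^∞ f(x + μ_n·v)²/(p_n·μ_n²) = ∞ in [0, ∞]. (This is the key divergence underlying the infinite variance of the single-evaluation P₁-estimator.) -/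
open scoped ENNReal

/-- For `f : ℝ^d → ℝ` continuous with `f x ≠ 0`, positive stepsizes
`μ n → 0` and a PMF `(p n)`, the nonnegative sequence
`n ↦ f(x + μ n • v)² / (p n * μ n²)` is not summable: its sum in `[0, ∞]` is `∞`.
(This is the key divergence underlying the infinite variance of the single-evaluation
`P₁`-estimator.) -/
theorem P1_key_divergence
    (d : ℕ) (hd : 1 ≤ d) (f : EuclideanSpace ℝ (Fin d) → ℝ)
    (hf : Continuous f)
    (x v : EuclideanSpace ℝ (Fin d)) (hfx : f x ≠ 0)
    (μ : ℕ → ℝ) (hμpos : ∀ n, 0 < μ n)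
    (hμ0 : Filter.Tendsto μ Filter.atTop (nhds 0))
    (p : ℕ → ℝ) (hppos : ∀ n, 0 < p n) (hpsum : ∑' n, p n = 1) :
    ∑' n, ENNReal.ofReal (f (x + μ n • v) ^ 2 / (p n * μ n ^ 2)) = ∞ := by
  by_contra hne
  have hps : Summable p := by
    by_contra h
    rw [tsum_eq_zero_of_not_summable h] at hpsum
    exact zero_ne_one hpsum
  have hp0 := hps.tendsto_atTop_zero
  have hnn : ∀ n, 0 ≤ f (x + μ n • v) ^ 2 / (p n * μ n ^ 2) := fun n =>
    div_nonneg (sq_nonneg _) (mul_nonneg (hppos n).le (sq_nonneg _))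
  have hs : Summable (fun n => f (x + μ n • v) ^ 2 / (p n * μ n ^ 2)) := by
    have h := ENNReal.summable_toReal hne
    refine h.congr (fun n => ?_)
    first
      | exact ENNReal.toReal_ofReal (hnn n)
      | exact (ENNReal.toReal_ofReal (hnn n)).symm
  have h1 := hs.tendsto_atTop_zero.mul (hp0.mul (hμ0.pow 2))
  have h2 : Filter.Tendsto (fun n => f (x + μ n • v) ^ 2) Filter.atTop (nhds (f x ^ 2)) := by
    have h3 : Filter.Tendsto (fun n => x + μ n • v) Filter.atTop (nhds x) := by
      simpa using (hμ0.smul_const v).const_add x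
    exact ((hf.tendsto x).comp h3).pow 2
  have h4 : Filter.Tendsto (fun n => f (x + μ n • v) ^ 2) Filter.atTop (nhds 0) := by
    have h5 := h1.congr (fun n => div_mul_cancel₀ (f (x + μ n • v) ^ 2)
      (mul_pos (hppos n) (pow_pos (hμpos n) 2)).ne')
    simpa using h5
  exact hfx (pow_eq_zero_iff (two_ne_zero)|>.mp (tendsto_nhds_unique h2 h4))
end

section
/- Let d ≥ 1, let f : ℝ^d → ℝ be twice continuously differentiable with L-Lipschitz gradient, and let x ∈ ℝ^d be a point where the Hessian ∇²f(x) is positive definite and f(x) ≠ 0. Let (μ_n)_{n≥1} be a positive decreasing sequence with ∑_{n=1}^∞ μ_n < ∞, let (p_n)_{n≥1} be a PMF, and fix v ∈ ℝ^d. Then the conditional second moment of the P₁-estimator is infinite: with T₀(n) := f(x)·(1/μ_1 + (1/p_n)(1/μ_{n+1} − 1/μ_n)), T₁ := f(x + μ_1·v)/μ_1, T₂(n) := f(x + μ_{n+1}·v)/(p_n·μ_{n+1}), T₃(n) := f(x + μ_n·v)/(p_n·μ_n), one has ∑_{n=1}^∞ (p_n/4)·(T₀(n)² + T₁² + T₂(n)²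 + T₃(n)²) = ∞ in [0, ∞]. -/
open scoped ENNReal RealInnerProductSpace

/-- For `f : ℝ^d → ℝ` twice continuously differentiable with
`L`-Lipschitz gradient, at a point `x` where the Hessian is positive definite and
`f x ≠ 0`, for any positive decreasing summable stepsizes `(μ n)`, PMF `(p n)`
(index `0` corresponds to the paper's `n = 1`) and direction `v`, the conditional
second moment of the `P₁`-estimator is infinite:
`∑ (p n / 4) (T₀ n² + T₁² + T₂ n² + T₃ n²) = ∞` in `[0, ∞]`, where
`T₀ n = f x * (1/μ 1 + (1/p n)(1/μ (n+1) - 1/μ n))`, `T₁ = f (x + μ 1 • v)/μ 1`,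
`T₂ n = f (x + μ (n+1) • v)/(p n * μ (n+1))`, `T₃ n = f (x + μ n • v)/(p n * μ n)`. -/
theorem P1_estimator_infinite_second_moment
    (d : ℕ) (hd : 1 ≤ d) (f : EuclideanSpace ℝ (Fin d) → ℝ) (L : ℝ)
    (hf : ContDiff ℝ 2 f)
    (hlip : ∀ x y : EuclideanSpace ℝ (Fin d),
      ‖gradient f x - gradient f y‖ ≤ L * ‖x - y‖)
    (x : EuclideanSpace ℝ (Fin d))
    (hHess : ∀ w : EuclideanSpace ℝ (Fin d), w ≠ 0 →
      0 < ⟪w, fderiv ℝ (gradient f) x w⟫)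
    (hfx : f x ≠ 0)
    (μ : ℕ → ℝ) (hμpos : ∀ n, 0 < μ n) (hμdec : ∀ n, μ (n + 1) ≤ μ n)
    (hμsum : Summable μ)
    (p : ℕ → ℝ) (hppos : ∀ n, 0 < p n) (hpsum : ∑' n, p n = 1)
    (v : EuclideanSpace ℝ (Fin d))
    (T₀ : ℕ → ℝ)
    (hT₀ : ∀ n, T₀ n = f x * (1 / μ 0 + (1 / p n) * (1 / μ (n + 1) - 1 / μ n)))
    (T₁ : ℝ) (hT₁ : T₁ = f (x + μ 0 • v) / μ 0)
    (T₂ : ℕ → ℝ) (hT₂ : ∀ n, T₂ n = f (x + μ (n + 1) • v) / (p n * μ (n + 1)))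
    (T₃ : ℕ → ℝ) (hT₃ : ∀ n, T₃ n = f (x + μ n • v) / (p n * μ n)) :
    ∑' n, ENNReal.ofReal ((p n / 4) * (T₀ n ^ 2 + T₁ ^ 2 + T₂ n ^ 2 + T₃ n ^ 2)) = ∞ := by
  by_contra hne
  have h0 := ENNReal.tendsto_atTop_zero_of_tsum_ne_top hne
  have hps : Summable p := by
    by_contra h
    rw [tsum_eq_zero_of_not_summable h] at hpsum
    norm_num at hpsum
  have hp1 : ∀ n, p n ≤ 1 := fun n => by
    rw [← hpsum]
    exact hps.le_tsum n (fun j _ => (hppos j).le)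
  have h1 := (ENNReal.tendsto_toReal ENNReal.zero_ne_top).comp h0
  have hμ0 := hμsum.tendsto_atTop_zero
  have hg : Filter.Tendsto (fun n => f (x + μ n • v) ^ 2) Filter.atTop (nhds (f x ^ 2)) := by
    have hc : Continuous (fun t : ℝ => f (x + t • v) ^ 2) := by
      have := hf.continuous
      fun_prop
    have := (hc.tendsto 0).comp hμ0
    simpa [Function.comp_def] using this
  have hr := ((hμ0.pow 2).const_mul 4).mul h1
  have hle := le_of_tendsto_of_tendsto' hg hr (fun n => by
    have hp := hppos n
    have hm := hμpos n
    have hnn : 0 ≤ (p n / 4) * (T₀ n ^ 2 + T₁ ^ 2 + T₂ n ^ 2 + T₃ n ^ 2) := by positivity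
    simp only [Function.comp_apply, ENNReal.toReal_ofReal hnn]
    have e : f (x + μ n • v) = T₃ n * (p n * μ n) := by
      rw [hT₃]
      field_simp
    have hpp : p n ^ 2 ≤ p n := by nlinarith [hp1 n]
    calc f (x + μ n • v) ^ 2 = p n ^ 2 * (μ n ^ 2 * T₃ n ^ 2) := by rw [e]; ring
      _ ≤ p n * (μ n ^ 2 * T₃ n ^ 2) := by gcongr
      _ ≤ p n * (μ n ^ 2 * (T₀ n ^ 2 + T₁ ^ 2 + T₂ n ^ 2 + T₃ n ^ 2)) := by
        gcongr
        nlinarith [sq_nonneg (T₀ n), sq_nonneg T₁, sq_nonneg (T₂ n)]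
      _ = _ := by ring)
  have : 0 < f x ^ 2 := by positivity
  norm_num at hle
  exact hfx hle
end

section
/- Let d ≥ 1, let f : ℝ^d → ℝ be twice continuously differentiable with L-Lipschitz gradient ∇f, fix x ∈ ℝ^d, let (μ_n)_{n≥1} be a positive decreasing sequence with ∑_{n=1}^∞ μ_n < ∞, let (p_n)_{n≥1} be a PMF, and let σ_d be the uniform probability measure on the sphere {v ∈ ℝ^d : ‖v‖ = √d}. Writing Δ_n(v) := (f(x + μ_n·v) − f(x))/μ_n, P₄(n, v) := Δ_1(v) + (1/p_n)(Δ_{n+1}(v) − Δ_n(v)), μ := μ_1, and ϱ := ∑_{n=1}^∞ (μ_n − μ_{n+1})²/p_n, the variance of the P₄-estimator of ∇f(x) satisfies, with all sums and integrals taken in [0, ∞]: ∑_{n=1}^∞ p_n · ∫ ‖P₄(n, v)·v − ∇f(x)‖² dσ_d(v) ≤ (d − 1)·‖∇f(x)‖² + (3L²/4)·d³·μ² + (L²·d³/2)·ϱ. -/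
open MeasureTheory Filter Topology
open scoped ENNReal RealInnerProductSpace

namespace P4aux

variable {d : ℕ}

lemma second_moment (hd : 1 ≤ d)
    (σ : Measure (EuclideanSpace ℝ (Fin d))) [IsProbabilityMeasure σ]
    (hs : ∀ᵐ v ∂σ, ‖v‖ ^ 2 = (d : ℝ))
    (hinv : ∀ R : EuclideanSpace ℝ (Fin d) ≃ₗᵢ[ℝ] EuclideanSpace ℝ (Fin d),
      Measure.map R σ = σ) (g : EuclideanSpace ℝ (Fin d)) :
    Integrable (fun v => ⟪g, v⟫ ^ 2) σ ∧ ∫ v, ⟪g, v⟫ ^ 2 ∂σ = ‖g‖ ^ 2 := by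
  have hint : ∀ u : EuclideanSpace ℝ (Fin d), Integrable (fun v => ⟪u, v⟫ ^ 2) σ := by
    intro u
    refine Integrable.mono' (integrable_const (‖u‖ ^ 2 * d))
      (Continuous.aestronglyMeasurable (by fun_prop)) ?_
    filter_upwards [hs] with v hv
    rw [Real.norm_of_nonneg (sq_nonneg _), ← hv, ← mul_pow]
    exact sq_le_sq' (by linarith [neg_le_of_abs_le (abs_real_inner_le_norm u v)])
      (real_inner_le_norm u v)
  refine ⟨hint g, ?_⟩
  have hrot : ∀ u w : EuclideanSpace ℝ (Fin d), ‖u‖ = ‖w‖ →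
      ∫ v, ⟪u, v⟫ ^ 2 ∂σ = ∫ v, ⟪w, v⟫ ^ 2 ∂σ := by
    intro u w huw
    set R := Submodule.reflection (ℝ ∙ (u - w))ᗮ with hR
    have hRu : R u = w := Submodule.reflection_sub huw
    conv_rhs => rw [← hinv R]
    rw [integral_map R.continuous.aemeasurable (Continuous.aestronglyMeasurable (by fun_prop))]
    simp_rw [← hRu, LinearIsometryEquiv.inner_map_map]
  have hcoord : ∀ i : Fin d, ∫ v, ⟪g, v⟫ ^ 2 ∂σ = ‖g‖ ^ 2 * ∫ v, (v i) ^ 2 ∂σ := by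
    intro i
    rw [hrot g (‖g‖ • EuclideanSpace.single i (1:ℝ)) (by simp [norm_smul]),
      ← integral_const_mul]
    congr 1
    ext v
    simp [inner_smul_left, EuclideanSpace.inner_single_left, mul_pow]
  have hci : ∀ i : Fin d, Integrable (fun v : EuclideanSpace ℝ (Fin d) => (v i) ^ 2) σ := by
    intro i
    have := hint (EuclideanSpace.single i (1:ℝ))
    simpa [EuclideanSpace.inner_single_left] using this
  have hsum : (d : ℝ) * ∫ v, ⟪g, v⟫ ^ 2 ∂σ = ‖g‖ ^ 2 * d := by
    calc (d : ℝ) * ∫ v, ⟪g, v⟫ ^ 2 ∂σ = ∑ i : Fin d, ∫ v, ⟪g, v⟫ ^ 2 ∂σ := by simp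
      _ = ∑ i : Fin d, ‖g‖ ^ 2 * ∫ v, (v i) ^ 2 ∂σ := Finset.sum_congr rfl fun i _ => hcoord i
      _ = ‖g‖ ^ 2 * ∫ v, ∑ i : Fin d, (v i) ^ 2 ∂σ := by
        rw [← Finset.mul_sum, integral_finsetSum _ fun i _ => hci i]
      _ = ‖g‖ ^ 2 * ∫ v : EuclideanSpace ℝ (Fin d), (d : ℝ) ∂σ := by
        congr 1
        apply integral_congr_ae
        filter_upwards [hs] with v hv
        rw [← hv, EuclideanSpace.real_norm_sq_eq]
      _ = _ := by simp
  have : (d : ℝ) ≠ 0 := by positivity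
  field_simp at hsum
  linarith

lemma diff_quot (f : EuclideanSpace ℝ (Fin d) → ℝ) (L : ℝ)
    (hf : ContDiff ℝ 2 f)
    (hlip : ∀ x y : EuclideanSpace ℝ (Fin d),
      ‖gradient f x - gradient f y‖ ≤ L * ‖x - y‖)
    (x v : EuclideanSpace ℝ (Fin d)) :
    ∃ D : ℝ → ℝ, D 0 = ⟪gradient f x, v⟫ ∧ (∀ t, 0 < t → D t = (f (x + t • v) - f x) / t) ∧
      ∀ s t, s ≤ t → |D t - D s| ≤ L * ‖v‖ ^ 2 / 2 * (t - s) := by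
  have hgc : Continuous (gradient f) := by
    have := hf.continuous_fderiv (by norm_num)
    unfold gradient
    fun_prop
  have hdiff : Differentiable ℝ f := hf.differentiable (by norm_num)
  refine ⟨fun t => ∫ u in (0:ℝ)..1, ⟪gradient f (x + (t * u) • v), v⟫, by simp, ?_, ?_⟩
  · intro t ht
    have hder : ∀ u ∈ Set.uIcc (0:ℝ) 1, HasDerivAt (fun u : ℝ => f (x + (t * u) • v) / t)
        ⟪gradient f (x + (t * u) • v), v⟫ u := by
      intro u _
      have h1 := ((hdiff (x + (t * u) • v)).hasGradientAt).hasFDerivAt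
      have h2 : HasDerivAt (fun u : ℝ => x + (t * u) • v) (t • v) u := by
        have := (((hasDerivAt_id u).const_mul t).smul_const v).const_add x
        simpa using this
      have h3 := (h1.comp_hasDerivAt u h2).div_const t
      simp only [InnerProductSpace.toDual_apply_apply, inner_smul_right] at h3
      rw [mul_div_cancel_left₀ _ ht.ne'] at h3
      exact h3
    have := intervalIntegral.integral_eq_sub_of_hasDerivAt hder
      (Continuous.intervalIntegrable (by fun_prop) _ _)
    simp only [this]
    simp
    ring
  · intro s t hst
    simp only
    rw [← intervalIntegral.integral_sub (Continuous.intervalIntegrable (by fun_prop) _ _)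
      (Continuous.intervalIntegrable (by fun_prop) _ _), ← Real.norm_eq_abs]
    have h := intervalIntegral.norm_integral_le_of_norm_le (μ := volume) (a := (0:ℝ)) (b := 1)
      (f := fun u => ⟪gradient f (x + (t * u) • v), v⟫ - ⟪gradient f (x + (s * u) • v), v⟫)
      (g := fun u => L * ‖v‖ ^ 2 * (t - s) * u) zero_le_one ?_
      (Continuous.intervalIntegrable (by fun_prop) _ _)
    · refine h.trans (le_of_eq ?_)
      rw [intervalIntegral.integral_const_mul, integral_id]
      ring
    · refine Eventually.of_forall fun u hu => ?_
      rw [← inner_sub_left]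
      refine (norm_inner_le_norm _ _).trans ?_
      have h1 := hlip (x + (t * u) • v) (x + (s * u) • v)
      have h2 : x + (t * u) • v - (x + (s * u) • v) = ((t - s) * u) • v := by
        module
      rw [h2, norm_smul, Real.norm_of_nonneg (mul_nonneg (by linarith) hu.1.le)] at h1
      calc _ ≤ L * ((t - s) * u * ‖v‖) * ‖v‖ := by gcongr
        _ = _ := by ring

/-- pointwise identity / bound for fixed `v` -/
lemma pointwise (D μ p b : ℕ → ℝ) (dd l G K : ℝ) (hdd : 0 ≤ dd)
    (hK : ∀ n, |D (n + 1) - D n| ≤ K * (μ n - μ (n + 1)))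
    (hD : Tendsto D atTop (𝓝 l)) (hμ : Tendsto μ atTop (𝓝 0))
    (hμdec : ∀ n, μ (n + 1) ≤ μ n)
    (hp : ∀ n, 0 < p n) (hps : HasSum p 1) (hb : Summable b)
    (hle : ∀ n, dd * ((K * (μ n - μ (n + 1))) ^ 2 / p n) ≤ b n) :
    Summable (fun n => p n * (dd * (D 0 + (1 / p n) * (D (n + 1) - D n)) ^ 2
      - 2 * (D 0 + (1 / p n) * (D (n + 1) - D n)) * l + G)) ∧
    ∑' n, p n * (dd * (D 0 + (1 / p n) * (D (n + 1) - D n)) ^ 2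
      - 2 * (D 0 + (1 / p n) * (D (n + 1) - D n)) * l + G)
      ≤ (dd - 2) * l ^ 2 + G + ∑' n, b n := by
  have hμs : Summable fun n => μ n - μ (n + 1) := by
    refine summable_of_sum_range_le (c := μ 0) (fun n => sub_nonneg.2 (hμdec n)) fun n => ?_
    rw [Finset.sum_range_sub']
    have : 0 ≤ μ n := (antitone_nat_of_succ_le hμdec).le_of_tendsto hμ n
    linarith
  have hδs : Summable fun n => D (n + 1) - D n :=
    Summable.of_norm_bounded (hμs.mul_left K) hK
  have hδ : HasSum (fun n => D (n + 1) - D n) (l - D 0) := by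
    have h1 := hδs.hasSum.tendsto_sum_nat
    simp_rw [Finset.sum_range_sub] at h1
    have h2 := tendsto_nhds_unique h1 (hD.sub_const (D 0))
    rw [← h2]
    exact hδs.hasSum
  have hq : ∀ n, dd * ((D (n + 1) - D n) ^ 2 / p n) ≤ b n := by
    intro n
    refine le_trans ?_ (hle n)
    have := (hp n).le
    have h2 : (D (n + 1) - D n) ^ 2 ≤ (K * (μ n - μ (n + 1))) ^ 2 := by
      rw [← sq_abs]
      exact pow_le_pow_left₀ (abs_nonneg _) (hK n) 2
    gcongr
  have hqs : Summable fun n => dd * ((D (n + 1) - D n) ^ 2 / p n) :=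
    Summable.of_nonneg_of_le
      (fun n => mul_nonneg hdd (div_nonneg (sq_nonneg _) (hp n).le)) hq hb
  have hS := hqs.tsum_le_tsum hq hb
  have hmain := ((hps.mul_left (dd * D 0 ^ 2 - 2 * D 0 * l + G)).add
    (hδ.mul_left (2 * dd * D 0 - 2 * l))).add hqs.hasSum
  have hfun : (fun n => p n * (dd * (D 0 + (1 / p n) * (D (n + 1) - D n)) ^ 2
      - 2 * (D 0 + (1 / p n) * (D (n + 1) - D n)) * l + G)) = fun n =>
      (dd * D 0 ^ 2 - 2 * D 0 * l + G) * p n + (2 * dd * D 0 - 2 * l) * (D (n + 1) - D n)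
        + dd * ((D (n + 1) - D n) ^ 2 / p n) := by
    ext n
    have := (hp n).ne'
    field_simp
    ring
  rw [hfun]
  refine ⟨hmain.summable, ?_⟩
  rw [hmain.tsum_eq]
  nlinarith [mul_nonneg hdd (sq_nonneg (D 0 - l))]

end P4aux


/-- Variance bound for the `P₄`-estimator. For `f` twice
continuously differentiable with `L`-Lipschitz gradient, positive decreasing summable
stepsizes `(μ n)`, a PMF `(p n)` (index `0` corresponds to the paper's `n = 1`) and
`σ` the uniform probability measure on the sphere of radius `√d`, writing
`Δ n v := (f (x + μ n • v) - f x)/μ n`,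
`P₄ n v := Δ 1 v + (1/p n)(Δ (n+1) v - Δ n v)`, `μ := μ 1` and
`ϱ := ∑ (μ n - μ (n+1))²/p n`, one has, with all sums and integrals in `[0, ∞]`:
`∑ p n ∫ ‖P₄ n v • v - ∇f x‖² dσ(v) ≤ (d-1)‖∇f x‖² + (3L²/4)d³μ² + (L²d³/2)ϱ`. -/
theorem P4_estimator_variance_bound
    (d : ℕ) (hd : 1 ≤ d) (f : EuclideanSpace ℝ (Fin d) → ℝ) (L : ℝ)
    (hf : ContDiff ℝ 2 f)
    (hlip : ∀ x y : EuclideanSpace ℝ (Fin d),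
      ‖gradient f x - gradient f y‖ ≤ L * ‖x - y‖)
    (x : EuclideanSpace ℝ (Fin d))
    (μ : ℕ → ℝ) (hμpos : ∀ n, 0 < μ n) (hμdec : ∀ n, μ (n + 1) ≤ μ n)
    (hμsum : Summable μ)
    (p : ℕ → ℝ) (hppos : ∀ n, 0 < p n) (hpsum : ∑' n, p n = 1)
    (σ : Measure (EuclideanSpace ℝ (Fin d))) [IsProbabilityMeasure σ]
    (hsupp : σ (Metric.sphere (0 : EuclideanSpace ℝ (Fin d)) (Real.sqrt d)) = 1)
    (hinv : ∀ R : EuclideanSpace ℝ (Fin d) ≃ₗᵢ[ℝ] EuclideanSpace ℝ (Fin d),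
      Measure.map R σ = σ)
    (Δ : ℕ → EuclideanSpace ℝ (Fin d) → ℝ)
    (hΔ : ∀ n v, Δ n v = (f (x + μ n • v) - f x) / μ n)
    (P₄ : ℕ → EuclideanSpace ℝ (Fin d) → ℝ)
    (hP₄ : ∀ n v, P₄ n v = Δ 0 v + (1 / p n) * (Δ (n + 1) v - Δ n v))
    (ϱ : ℝ≥0∞) (hϱ : ϱ = ∑' n, ENNReal.ofReal ((μ n - μ (n + 1)) ^ 2 / p n)) :
    ∑' n, ENNReal.ofReal (p n) *
        ∫⁻ v, ENNReal.ofReal (‖P₄ n v • v - gradient f x‖ ^ 2) ∂σ ≤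
      ENNReal.ofReal (((d : ℝ) - 1) * ‖gradient f x‖ ^ 2
          + (3 * L ^ 2 / 4) * (d : ℝ) ^ 3 * μ 0 ^ 2)
        + ENNReal.ofReal (L ^ 2 * (d : ℝ) ^ 3 / 2) * ϱ := by

  have hdpos : (0:ℝ) < d := by exact_mod_cast hd
  have hs : ∀ᵐ v ∂σ, ‖v‖ ^ 2 = (d : ℝ) := by
    have h1 : ∀ᵐ v ∂σ, v ∈ Metric.sphere (0 : EuclideanSpace ℝ (Fin d)) (Real.sqrt d) :=
      (prob_compl_eq_zero_iff Metric.isClosed_sphere.measurableSet).2 hsupp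
    filter_upwards [h1] with v hv
    rw [mem_sphere_zero_iff_norm] at hv
    rw [hv, Real.sq_sqrt hdpos.le]
  have hps : HasSum p 1 := by
    have : Summable p := by
      by_contra h
      rw [tsum_eq_zero_of_not_summable h] at hpsum
      exact zero_ne_one hpsum
    rw [← hpsum]
    exact this.hasSum
  set g := gradient f x with hg
  obtain ⟨hI, hM⟩ := P4aux.second_moment hd σ hs hinv g
  set b : ℕ → ℝ := fun n => L ^ 2 * (d : ℝ) ^ 3 / 2 * ((μ n - μ (n + 1)) ^ 2 / p n) with hbdef
  have hb0 : ∀ n, 0 ≤ b n := fun n =>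
    mul_nonneg (by positivity) (div_nonneg (sq_nonneg _) (hppos n).le)
  have hbϱ : ENNReal.ofReal (L ^ 2 * (d : ℝ) ^ 3 / 2) * ϱ = ∑' n, ENNReal.ofReal (b n) := by
    rw [hϱ, ← ENNReal.tsum_mul_left]
    congr 1
    ext n
    rw [← ENNReal.ofReal_mul (by positivity)]
  rw [hbϱ]
  by_cases htop : ∑' n, ENNReal.ofReal (b n) = ∞
  · rw [htop]; simp
  have hbs : Summable b := by
    have := ENNReal.summable_toReal htop
    simpa [ENNReal.toReal_ofReal (hb0 _)] using this
  rw [← ENNReal.ofReal_tsum_of_nonneg hb0 hbs]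
  have hfc : Continuous f := hf.continuous
  have hPc : ∀ n, Continuous (P₄ n) := by
    intro n
    have hΔc : ∀ m, Continuous (Δ m) := by
      intro m
      rw [show Δ m = fun v => (f (x + μ m • v) - f x) / μ m from funext (hΔ m)]
      fun_prop
    have h0 := hΔc 0
    have h1 := hΔc n
    have h2 := hΔc (n + 1)
    rw [show P₄ n = fun v => Δ 0 v + (1 / p n) * (Δ (n + 1) v - Δ n v) from funext (hP₄ n)]
    fun_prop
  have hmeas : ∀ n, Measurable fun v => ENNReal.ofReal (‖P₄ n v • v - g‖ ^ 2) := by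
    intro n
    have := hPc n
    exact (Continuous.measurable (by fun_prop)).ennreal_ofReal
  calc ∑' n, ENNReal.ofReal (p n) * ∫⁻ v, ENNReal.ofReal (‖P₄ n v • v - g‖ ^ 2) ∂σ
      = ∫⁻ v, ∑' n, ENNReal.ofReal (p n) * ENNReal.ofReal (‖P₄ n v • v - g‖ ^ 2) ∂σ := by
        rw [lintegral_tsum fun n => ((hmeas n).const_mul _).aemeasurable]
        congr 1
        ext n
        rw [lintegral_const_mul _ (hmeas n)]
    _ ≤ ∫⁻ v, ENNReal.ofReal (((d : ℝ) - 2) * ⟪g, v⟫ ^ 2 + ‖g‖ ^ 2 + ∑' n, b n) ∂σ := by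
        apply lintegral_mono_ae
        filter_upwards [hs] with v hv
        obtain ⟨D, hD0, hDt, hDl⟩ := P4aux.diff_quot f L hf hlip x v
        have hDΔ : ∀ n, Δ n v = D (μ n) := fun n => by rw [hΔ, hDt _ (hμpos n)]
        have hμ0 := hμsum.tendsto_atTop_zero
        have hlim : Tendsto (fun n => D (μ n)) atTop (𝓝 ⟪g, v⟫) := by
          rw [← hD0, tendsto_iff_norm_sub_tendsto_zero]
          have h2 := hμ0.const_mul (L * ‖v‖ ^ 2 / 2)
          rw [mul_zero] at h2
          refine squeeze_zero (fun _ => norm_nonneg _) (fun n => ?_) h2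
          have := hDl 0 (μ n) (hμpos n).le
          rwa [sub_zero] at this
        have hpt := P4aux.pointwise (fun n => D (μ n)) μ p b d ⟪g, v⟫ (‖g‖ ^ 2)
          (L * ‖v‖ ^ 2 / 2) hdpos.le
          (fun n => by rw [abs_sub_comm]; exact hDl _ _ (hμdec n)) hlim hμ0 hμdec hppos hps hbs
          (fun n => by
            rw [hv]
            have h0 := hb0 n
            have : (d:ℝ) * ((L * d / 2 * (μ n - μ (n + 1))) ^ 2 / p n) = b n / 2 := by
              simp only [hbdef]; ring
            rw [this]; linarith)
        have hexp : ∀ n, p n * ‖P₄ n v • v - g‖ ^ 2 =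
            p n * (d * (D (μ 0) + (1 / p n) * (D (μ (n + 1)) - D (μ n))) ^ 2
              - 2 * (D (μ 0) + (1 / p n) * (D (μ (n + 1)) - D (μ n))) * ⟪g, v⟫ + ‖g‖ ^ 2) := by
          intro n
          rw [norm_sub_sq_real, norm_smul, mul_pow, hv, inner_smul_left, real_inner_comm,
            Real.norm_eq_abs, sq_abs, hP₄, hDΔ, hDΔ, hDΔ]
          simp only [conj_trivial]
          ring
        simp_rw [← hexp] at hpt
        simp_rw [← ENNReal.ofReal_mul (hppos _).le]
        rw [← ENNReal.ofReal_tsum_of_nonneg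
          (fun n => mul_nonneg (hppos n).le (sq_nonneg _)) hpt.1]
        exact ENNReal.ofReal_le_ofReal hpt.2
    _ = ENNReal.ofReal (((d : ℝ) - 1) * ‖g‖ ^ 2 + ∑' n, b n) := by
        rw [← ofReal_integral_eq_lintegral_ofReal]
        · have hI2 : Integrable (fun v => ((d : ℝ) - 2) * ⟪g, v⟫ ^ 2 + ‖g‖ ^ 2) σ :=
            (hI.const_mul _).add (integrable_const _)
          rw [integral_add hI2 (integrable_const _),
            integral_add (hI.const_mul _) (integrable_const _), integral_const_mul, hM]
          simp
          ring_nf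
        · exact ((hI.const_mul _).add (integrable_const _)).add (integrable_const _)
        · filter_upwards [hs] with v hv
          have h1 : 0 ≤ ∑' n, b n := tsum_nonneg hb0
          have h2 : ⟪g, v⟫ ^ 2 ≤ ‖g‖ ^ 2 * d := by
            rw [← hv, ← mul_pow]
            exact sq_le_sq' (by linarith [neg_le_of_abs_le (abs_real_inner_le_norm g v)])
              (real_inner_le_norm g v)
          have h3 : 0 ≤ ((d:ℝ) - 2) * ⟪g, v⟫ ^ 2 + ‖g‖ ^ 2 := by
            rcases Nat.lt_or_ge d 2 with h | h
            · have : d = 1 := by omega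
              have hd1 : (d:ℝ) = 1 := by exact_mod_cast this
              rw [hd1] at h2 ⊢
              linarith
            · have : (2:ℝ) ≤ d := by exact_mod_cast h
              have := mul_nonneg (sub_nonneg.2 this) (sq_nonneg ⟪g, v⟫)
              positivity
          simp only [Pi.zero_apply]
          linarith
    _ ≤ _ := by
        have hd1 : (1:ℝ) ≤ d := by exact_mod_cast hd
        have := sub_nonneg.2 hd1
        rw [← ENNReal.ofReal_add (by positivity) (tsum_nonneg hb0)]
        apply ENNReal.ofReal_le_ofReal
        have : 0 ≤ (3 * L ^ 2 / 4) * (d : ℝ) ^ 3 * μ 0 ^ 2 := by positivity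
        linarith
end
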